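/- Let μ be a probability measure on ℝ^d. Suppose there exists a constant β > 1 such that for all sufficiently small r > 0 one has s_r(μ) < (log(1/r))^{−β}. Then μ is absolutely continuous with respect to Lebesgue measure on ℝ^d. -/

import Mathlib

open MeasureTheory Real

/-- Density of the centered Gaussian on `ℝ^d` with covariance matrix `y • I`. -/
noncomputable def gaussD (d : ℕ) (y : ℝ) (x : EuclideanSpace ℝ (Fin d)) : ℝ :=
  (2 * Real.pi * y) ^ (-(d : ℝ) / 2) * Real.exp (-‖x‖ ^ 2 / (2 * y))

/-- `∂/∂y n_y (x)`. -/
noncomputable def gaussDy (d : ℕ) (y : ℝ) (x : EuclideanSpace ℝ (Fin d)) : ℝ :=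
  deriv (fun u => gaussD d u x) y

/-- The detail of a measure `μ` on `ℝ^d` around the scale `r`. -/
noncomputable def detail (d : ℕ) (μ : Measure (EuclideanSpace ℝ (Fin d))) (r : ℝ) : ℝ :=
  r ^ 2 * (Real.Gamma ((d : ℝ) / 2) / 2) * ((d : ℝ) / (2 * Real.exp 1)) ^ (-(d : ℝ) / 2) *
    ∫ x, |∫ z, gaussDy d (r ^ 2) (x - z) ∂μ|

/-!
The derivative of `r ↦ (μ ∗ γ_{r²})(U)`, where `γ_y` is the centered Gaussian measure of covariance
`y • I`, is at most a constant times `detail d μ r / r` in absolute value. If `detail d μ r / r` is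
dominated near `0` by an integrable function of `r`, then integrating from `t` to `b` and letting
`t → 0` (Fatou's lemma, for `U` open) gives `μ U ≤ (μ ∗ γ_{b²}) U + ε` with `ε` independent of `U`
and tending to `0` with `b`. Covering a Lebesgue-null set, which is also null for the absolutely
continuous measure `μ ∗ γ_{b²}`, by such open sets shows that it is `μ`-null. For
`detail d μ r < (log r⁻¹) ^ (-β)` the integrability is that of `(log r⁻¹) ^ (-β) / r`, whose
primitive `(log r⁻¹) ^ (1 - β) / (β - 1)` vanishes at `0` because `β > 1`.
-/

open Filter Set Topology
open scoped ENNReal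

theorem absolutelyContinuous_of_forall_measure_isOpen_le {X : Type*} [TopologicalSpace X]
    [MeasurableSpace X] {μ ν : Measure X}
    (h : ∀ ε : ℝ≥0∞, 0 < ε → ∃ ρ : Measure X, ρ.OuterRegular ∧ ρ ≪ ν ∧
      ∀ U, IsOpen U → μ U ≤ ρ U + ε) :
    μ ≪ ν := by
  intro s hs
  by_contra hμs
  obtain ⟨ε, hε, hεs⟩ : ∃ ε : ℝ≥0∞, 0 < ε ∧ ε < μ s / 2 := exists_between (by simpa using hμs)
  obtain ⟨ρ, _, hρν, hρ⟩ := h ε hε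
  obtain ⟨U, hsU, hU, hρU⟩ := s.exists_isOpen_lt_of_lt (μ := ρ) ε (by simpa [hρν hs])
  have : μ s < μ s := calc
    μ s ≤ μ U := measure_mono hsU
    _ ≤ ρ U + ε := hρ U hU
    _ ≤ ε + ε := by gcongr
    _ < μ s / 2 + μ s / 2 := ENNReal.add_lt_add hεs hεs
    _ = μ s := ENNReal.add_halves _
  exact this.false

theorem absolutelyContinuous_of_discreteTopology {X : Type*} [TopologicalSpace X]
    [DiscreteTopology X] [MeasurableSpace X] (μ ν : Measure X) [ν.IsOpenPosMeasure] : μ ≪ ν := by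
  intro s hs
  rw [((isOpen_discrete s).measure_eq_zero_iff ν).1 hs, measure_empty]

theorem conv_map_apply {E F : Type*} [AddMonoid E] [MeasurableSpace E] [MeasurableAdd₂ E]
    [MeasurableSpace F] (μ : Measure E) (ν : Measure F) [SFinite μ] [SFinite ν] {f : F → E}
    (hf : Measurable f) {s : Set E} (hs : MeasurableSet s) :
    (μ ∗ ν.map f) s = (μ.prod ν) {p | p.1 + f p.2 ∈ s} := by
  rw [Measure.conv, Measure.map_apply measurable_add hs]
  nth_rw 1 [← Measure.map_id (μ := μ)]
  rw [Measure.map_prod_map _ _ measurable_id hf,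
    Measure.map_apply (measurable_id.prodMap hf) (measurable_add hs)]
  rfl

theorem measure_isOpen_le_liminf_conv_map_smul {E : Type*} [AddCommMonoid E] [Module ℝ E]
    [TopologicalSpace E] [ContinuousAdd E] [ContinuousSMul ℝ E] [MeasurableSpace E]
    [OpensMeasurableSpace E] [MeasurableAdd₂ E] [MeasurableConstSMul ℝ E]
    (μ ν : Measure E) [SFinite μ] [IsProbabilityMeasure ν] {U : Set E} (hU : IsOpen U) :
    μ U ≤ liminf (fun t : ℝ ↦ (μ ∗ ν.map (t • ·)) U) (𝓝 0) := by
  set S : ℝ → Set (E × E) := fun t ↦ {p | p.1 + t • p.2 ∈ U}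
  have hS (t : ℝ) : MeasurableSet (S t) :=
    (show Measurable fun p : E × E ↦ p.1 + t • p.2 by fun_prop) hU.measurableSet
  have eventually_mem_S {p : E × E} (hp : p.1 ∈ U) : ∀ᶠ t in 𝓝 0, p ∈ S t := by
    have : Tendsto (fun t : ℝ ↦ p.1 + t • p.2) (𝓝 0) (𝓝 p.1) := by
      simpa using (show Continuous fun t : ℝ ↦ p.1 + t • p.2 by fun_prop).tendsto 0
    exact this.eventually (hU.mem_nhds hp)
  calc μ U = (μ.prod ν) (U ×ˢ univ) := by simp
    _ = ∫⁻ p, (U ×ˢ univ).indicator 1 p ∂(μ.prod ν) :=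
      (lintegral_indicator_one (hU.measurableSet.prod .univ)).symm
    _ ≤ ∫⁻ p, liminf (fun t ↦ (S t).indicator 1 p) (𝓝 0) ∂(μ.prod ν) := by
      refine lintegral_mono (indicator_le fun p hp ↦ le_liminf_of_le (by isBoundedDefault) ?_)
      filter_upwards [eventually_mem_S hp.1] with t ht
      simp [ht]
    _ ≤ liminf (fun t ↦ ∫⁻ p, (S t).indicator 1 p ∂(μ.prod ν)) (𝓝 0) :=
      lintegral_liminf_le fun t ↦ measurable_one.indicator (hS t)
    _ = liminf (fun t : ℝ ↦ (μ ∗ ν.map (t • ·)) U) (𝓝 0) := by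
      simp only [lintegral_indicator_one (hS _),
        conv_map_apply μ ν (measurable_const_smul _) hU.measurableSet, S]

theorem measureReal_conv_withDensity_ofReal {M : Type*} [AddMonoid M] [MeasurableSpace M]
    [MeasurableAdd₂ M] (μ ν : Measure M) [SFinite μ] [SFinite ν] {g : M → ℝ} (hg₀ : 0 ≤ g)
    (hg : Measurable g) {s : Set M} (hs : MeasurableSet s) :
    (μ ∗ ν.withDensity fun x ↦ ENNReal.ofReal (g x)).real s =
      ∫ p in {p : M × M | p.1 + p.2 ∈ s}, g p.2 ∂(μ.prod ν) := by
  rw [integral_eq_lintegral_of_nonneg_ae (f := fun p : M × M ↦ g p.2)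
      (.of_forall fun p ↦ hg₀ p.2) (hg.comp measurable_snd).aestronglyMeasurable,
    Measure.real, Measure.conv, Measure.map_apply measurable_add hs,
    prod_withDensity_right hg.ennreal_ofReal, withDensity_apply _ (measurable_add hs)]
  rfl

section ConvolutionWithFunction

variable {G : Type*} [AddCommGroup G] [MeasurableSpace G] [MeasurableAdd₂ G] [MeasurableNeg G]
  {μ ν : Measure G} [IsFiniteMeasure μ] [SFinite ν] [ν.IsAddRightInvariant] {g : G → ℝ}

theorem integrable_comp_fst_sub_snd (hg : Integrable g ν) :
    Integrable (fun p : G × G ↦ g (p.1 - p.2)) (ν.prod μ) :=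
  (measurePreserving_prod_sub_swap ν μ).integrable_comp_of_integrable (hg.comp_snd μ)

theorem setIntegral_prod_add_mem (hg : Integrable g ν) {s : Set G} (hs : MeasurableSet s) :
    ∫ p in {p : G × G | p.1 + p.2 ∈ s}, g p.2 ∂(μ.prod ν) =
      ∫ x in s, ∫ z, g (x - z) ∂μ ∂ν := by
  have hS : MeasurableSet {p : G × G | p.1 + p.2 ∈ s} := measurable_add hs
  have hpre : (fun p : G × G ↦ (p.2, p.1 - p.2)) ⁻¹' {p | p.1 + p.2 ∈ s} = s ×ˢ univ := by
    ext; simp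
  have hmp := measurePreserving_prod_sub_swap ν μ
  rw [← hmp.map_eq, setIntegral_map hS _ hmp.aemeasurable, hpre,
    setIntegral_prod _ (integrable_comp_fst_sub_snd hg).integrableOn]
  · simp
  · rw [hmp.map_eq]
    exact (hg.comp_snd μ).aestronglyMeasurable

theorem abs_setIntegral_prod_add_mem_le (hg : Integrable g ν) {s : Set G}
    (hs : MeasurableSet s) :
    |∫ p in {p : G × G | p.1 + p.2 ∈ s}, g p.2 ∂(μ.prod ν)| ≤
      ∫ x, |∫ z, g (x - z) ∂μ| ∂ν := by
  rw [setIntegral_prod_add_mem hg hs]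
  calc |∫ x in s, ∫ z, g (x - z) ∂μ ∂ν| ≤ ∫ x in s, |∫ z, g (x - z) ∂μ| ∂ν :=
      abs_integral_le_integral_abs
    _ ≤ ∫ x, |∫ z, g (x - z) ∂μ| ∂ν :=
      setIntegral_le_integral (integrable_comp_fst_sub_snd hg).integral_prod_left.abs
        (.of_forall fun _ ↦ abs_nonneg _)

end ConvolutionWithFunction

theorem integrable_rexp_neg_mul_sq_norm {V : Type*} [NormedAddCommGroup V]
    [InnerProductSpace ℝ V] [FiniteDimensional ℝ V] [MeasurableSpace V] [BorelSpace V] {b : ℝ}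
    (hb : 0 < b) : Integrable fun v : V ↦ rexp (-b * ‖v‖ ^ 2) := by
  refine .of_integral_ne_zero ?_
  rw [GaussianFourier.integral_rexp_neg_mul_sq_norm hb]
  positivity

section GaussianSmoothing

variable {d : ℕ} {y : ℝ}

theorem gaussD_nonneg (hy : 0 < y) : 0 ≤ gaussD d y := fun x ↦ by
  simp only [gaussD, Pi.zero_apply]
  positivity

@[fun_prop]
theorem measurable_gaussD : Measurable (gaussD d y) := by
  unfold gaussD
  fun_prop

theorem integrable_gaussD (hy : 0 < y) : Integrable (gaussD d y) := by
  refine ((integrable_rexp_neg_mul_sq_norm (b := 1 / (2 * y)) (by positivity)).const_mul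
    ((2 * π * y) ^ (-(d : ℝ) / 2))).congr (.of_forall fun x ↦ ?_)
  simp only [gaussD]
  ring_nf

theorem integral_gaussD (hy : 0 < y) : ∫ x, gaussD d y x = 1 := by
  have hexp (x : EuclideanSpace ℝ (Fin d)) : -‖x‖ ^ 2 / (2 * y) = -(1 / (2 * y)) * ‖x‖ ^ 2 := by
    ring
  simp only [gaussD, hexp]
  rw [integral_const_mul, GaussianFourier.integral_rexp_neg_mul_sq_norm (by positivity),
    finrank_euclideanSpace_fin, neg_div, rpow_neg (by positivity),
    show π / (1 / (2 * y)) = 2 * π * y by field_simp]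
  exact inv_mul_cancel₀ (by positivity)

theorem gaussD_eq_pow_mul_gaussD_smul {t : ℝ} (ht : 0 < t) (hy : 0 < y)
    (x : EuclideanSpace ℝ (Fin d)) :
    gaussD d y x = t ^ d * gaussD d (t ^ 2 * y) (t • x) := by
  have hpow : (t ^ 2) ^ (-(d : ℝ) / 2) = (t ^ d)⁻¹ := by
    rw [← rpow_natCast t 2, ← rpow_mul ht.le, ← rpow_natCast t d, ← rpow_neg ht.le]
    ring_nf
  have hexp : -‖t • x‖ ^ 2 / (2 * (t ^ 2 * y)) = -‖x‖ ^ 2 / (2 * y) := by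
    rw [norm_smul, norm_of_nonneg ht.le]
    field_simp
  rw [gaussD, gaussD, hexp, show 2 * π * (t ^ 2 * y) = t ^ 2 * (2 * π * y) by ring,
    mul_rpow (x := t ^ 2) (y := 2 * π * y) (by positivity) (by positivity), hpow]
  field_simp

/-- The centered Gaussian measure on `ℝ^d` with covariance matrix `y • I`. -/
noncomputable def gaussianMeasure (d : ℕ) (y : ℝ) : Measure (EuclideanSpace ℝ (Fin d)) :=
  volume.withDensity fun x ↦ ENNReal.ofReal (gaussD d y x)

instance : SFinite (gaussianMeasure d y) := by
  unfold gaussianMeasure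
  infer_instance

theorem isProbabilityMeasure_gaussianMeasure (hy : 0 < y) :
    IsProbabilityMeasure (gaussianMeasure d y) := by
  refine ⟨?_⟩
  rw [gaussianMeasure, withDensity_apply _ .univ, setLIntegral_univ,
    ← ofReal_integral_eq_lintegral_ofReal (integrable_gaussD hy)
      (.of_forall (gaussD_nonneg hy)), integral_gaussD hy, ENNReal.ofReal_one]

theorem map_smul_gaussianMeasure {t : ℝ} (ht : 0 < t) (hy : 0 < y) :
    (gaussianMeasure d y).map (t • ·) = gaussianMeasure d (t ^ 2 * y) := by
  ext s hs
  have hmeas : Measurable fun x ↦ ENNReal.ofReal (t ^ d * gaussD d (t ^ 2 * y) x) := by fun_prop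
  rw [gaussianMeasure, gaussianMeasure, Measure.map_apply (measurable_const_smul t) hs,
    withDensity_apply _ hs, withDensity_apply _ (measurable_const_smul t hs)]
  calc ∫⁻ x in (t • ·) ⁻¹' s, ENNReal.ofReal (gaussD d y x)
    _ = ∫⁻ x in s, ENNReal.ofReal (t ^ d * gaussD d (t ^ 2 * y) x)
          ∂(Measure.map (t • ·) (volume : Measure (EuclideanSpace ℝ (Fin d)))) := by
      simp only [setLIntegral_map hs hmeas (measurable_const_smul t),
        gaussD_eq_pow_mul_gaussD_smul ht hy]
    _ = ENNReal.ofReal (t ^ d)⁻¹ *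
          (ENNReal.ofReal (t ^ d) * ∫⁻ x in s, ENNReal.ofReal (gaussD d (t ^ 2 * y) x)) := by
      rw [Measure.map_addHaar_smul _ ht.ne', finrank_euclideanSpace_fin, Measure.restrict_smul,
        lintegral_smul_measure, abs_of_pos (by positivity), smul_eq_mul]
      simp only [ENNReal.ofReal_mul (pow_nonneg ht.le d)]
      rw [lintegral_const_mul _ (by fun_prop)]
    _ = ∫⁻ x in s, ENNReal.ofReal (gaussD d (t ^ 2 * y) x) := by
      rw [← mul_assoc, ← ENNReal.ofReal_mul (by positivity), inv_mul_cancel₀ (by positivity),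
        ENNReal.ofReal_one, one_mul]

theorem hasDerivAt_gaussD (hy : 0 < y) (x : EuclideanSpace ℝ (Fin d)) :
    HasDerivAt (fun u ↦ gaussD d u x)
      (gaussD d y x * (‖x‖ ^ 2 / (2 * y ^ 2) - d / (2 * y))) y := by
  unfold gaussD
  have hpow : HasDerivAt (fun u : ℝ ↦ (2 * π * u) ^ (-(d : ℝ) / 2)) _ y :=
    ((hasDerivAt_id y).const_mul (2 * π)).rpow_const (Or.inl (by positivity))
  have hexponent : HasDerivAt (fun u : ℝ ↦ -‖x‖ ^ 2 / (2 * u)) (‖x‖ ^ 2 / (2 * y ^ 2)) y := by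
    refine ((hasDerivAt_const y (-‖x‖ ^ 2)).fun_div ((hasDerivAt_id y).const_mul 2)
      (by positivity)).congr_deriv ?_
    simp only [id]
    field_simp
    ring
  refine (hpow.fun_mul hexponent.exp).congr_deriv ?_
  simp only [id]
  rw [rpow_sub_one (by positivity)]
  field_simp
  ring

theorem gaussDy_eq (hy : 0 < y) (x : EuclideanSpace ℝ (Fin d)) :
    gaussDy d y x = gaussD d y x * (‖x‖ ^ 2 / (2 * y ^ 2) - d / (2 * y)) :=
  (hasDerivAt_gaussD hy x).deriv

theorem measurable_gaussDy (hy : 0 < y) : Measurable (gaussDy d y) := by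
  rw [funext (gaussDy_eq hy)]
  fun_prop

theorem abs_gaussDy_le (hy : 0 < y) (x : EuclideanSpace ℝ (Fin d)) :
    |gaussDy d y x| ≤
      (2 * π * y) ^ (-(d : ℝ) / 2) * ((2 + d / 2) / y) * rexp (-(1 / (4 * y)) * ‖x‖ ^ 2) := by
  -- Half of the Gaussian exponent absorbs the quadratic factor.
  set t := ‖x‖ ^ 2 / (4 * y) with ht
  have ht₀ : 0 ≤ t := by positivity
  have hpoly : |2 * t - d / 2| ≤ (2 + d / 2) * rexp t := by
    have hd : (0 : ℝ) ≤ d / 2 := by positivity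
    have hexp : t + 1 ≤ rexp t := add_one_le_exp t
    rw [abs_le]
    constructor <;> nlinarith
  have hgauss : gaussD d y x = (2 * π * y) ^ (-(d : ℝ) / 2) * (rexp (-t) * rexp (-t)) := by
    rw [gaussD, ← exp_add, ht]
    ring_nf
  have hfactor : ‖x‖ ^ 2 / (2 * y ^ 2) - d / (2 * y) = (2 * t - d / 2) / y := by
    rw [ht]
    field_simp
    ring
  calc |gaussDy d y x|
    _ = (2 * π * y) ^ (-(d : ℝ) / 2) * (|2 * t - d / 2| / y) * (rexp (-t) * rexp (-t)) := by
      rw [gaussDy_eq hy, hgauss, hfactor, abs_mul, abs_div, abs_of_pos hy,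
        abs_of_nonneg (by positivity)]
      ring
    _ ≤ (2 * π * y) ^ (-(d : ℝ) / 2) * ((2 + d / 2) * rexp t / y) * (rexp (-t) * rexp (-t)) := by
      gcongr
    _ = (2 * π * y) ^ (-(d : ℝ) / 2) * ((2 + d / 2) / y) * rexp (-t) * (rexp t * rexp (-t)) := by
      ring
    _ = (2 * π * y) ^ (-(d : ℝ) / 2) * ((2 + d / 2) / y) * rexp (-(1 / (4 * y)) * ‖x‖ ^ 2) := by
      rw [← exp_add, add_neg_cancel, exp_zero, mul_one, ht]
      ring_nf

theorem abs_gaussDy_le_of_mem_Icc {a b : ℝ} (ha : 0 < a) (hy : y ∈ Icc a b)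
    (x : EuclideanSpace ℝ (Fin d)) :
    |gaussDy d y x| ≤
      (2 * π * a) ^ (-(d : ℝ) / 2) * ((2 + d / 2) / a) * rexp (-(1 / (4 * b)) * ‖x‖ ^ 2) := by
  have hy₀ : 0 < y := ha.trans_le hy.1
  refine (abs_gaussDy_le hy₀ x).trans ?_
  have hpow : (2 * π * y) ^ (-(d : ℝ) / 2) ≤ (2 * π * a) ^ (-(d : ℝ) / 2) :=
    rpow_le_rpow_of_nonpos (by positivity) (by gcongr; exact hy.1)
      (div_nonpos_of_nonpos_of_nonneg (by simp) (by simp))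
  gcongr
  exacts [hy.1, hy.2]

theorem integrable_gaussDy (hy : 0 < y) : Integrable (gaussDy d y) :=
  ((integrable_rexp_neg_mul_sq_norm (by positivity)).const_mul _).mono'
    (measurable_gaussDy hy).aestronglyMeasurable (.of_forall (abs_gaussDy_le hy))

theorem hasDerivAt_setIntegral_gaussD {F : Type*} [MeasurableSpace F] (μ : Measure F)
    [IsFiniteMeasure μ] (S : Set (F × EuclideanSpace ℝ (Fin d))) (hy : 0 < y) :
    HasDerivAt (fun u ↦ ∫ p in S, gaussD d u p.2 ∂(μ.prod volume))
      (∫ p in S, gaussDy d y p.2 ∂(μ.prod volume)) y := by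
  have hpos {u : ℝ} (hu : u ∈ Icc (y / 2) (2 * y)) : 0 < u := (half_pos hy).trans_le hu.1
  have hbound := ((integrable_rexp_neg_mul_sq_norm (V := EuclideanSpace ℝ (Fin d))
    (b := 1 / (4 * (2 * y))) (by positivity)).const_mul
    ((2 * π * (y / 2)) ^ (-(d : ℝ) / 2) * ((2 + d / 2) / (y / 2)))).comp_snd μ
  refine (hasDerivAt_integral_of_dominated_loc_of_deriv_le
    (F := fun u (p : F × EuclideanSpace ℝ (Fin d)) ↦ gaussD d u p.2)
    (F' := fun u p ↦ gaussDy d u p.2)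
    (s := Icc (y / 2) (2 * y)) (Icc_mem_nhds (half_lt_self hy) (by linarith))
    ?_ ?_ ?_ ?_ (hbound.restrict (s := S)) ?_).2
  · exact .of_forall fun u ↦ (measurable_gaussD.comp measurable_snd).aestronglyMeasurable
  · exact ((integrable_gaussD hy).comp_snd μ).restrict
  · exact ((measurable_gaussDy hy).comp measurable_snd).aestronglyMeasurable
  · exact .of_forall fun p u hu ↦ abs_gaussDy_le_of_mem_Icc (half_pos hy) hu p.2
  · exact .of_forall fun p u hu ↦ (hasDerivAt_gaussD (hpos hu) p.2).differentiableAt.hasDerivAt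

/-- The factor `Γ(d/2)/2 · (d/(2e))^(-d/2)` normalizing the detail. -/
noncomputable def detailConst (d : ℕ) : ℝ :=
  Gamma (d / 2) / 2 * (d / (2 * rexp 1)) ^ (-(d : ℝ) / 2)

theorem detailConst_pos (hd : 0 < d) : 0 < detailConst d := by
  have : 0 < Gamma ((d : ℝ) / 2) := Gamma_pos_of_pos (by positivity)
  unfold detailConst
  positivity

theorem detail_eq (μ : Measure (EuclideanSpace ℝ (Fin d))) (r : ℝ) :
    detail d μ r = detailConst d * (r ^ 2 * ∫ x, |∫ z, gaussDy d (r ^ 2) (x - z) ∂μ|) := by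
  unfold detail detailConst
  ring

theorem detail_nonneg (μ : Measure (EuclideanSpace ℝ (Fin d))) (r : ℝ) : 0 ≤ detail d μ r := by
  have : 0 ≤ Gamma ((d : ℝ) / 2) := Gamma_nonneg_of_nonneg (by positivity)
  unfold detail
  positivity

section DerivativeOfSmoothing

variable {μ : Measure (EuclideanSpace ℝ (Fin d))} [IsFiniteMeasure μ]
  {s : Set (EuclideanSpace ℝ (Fin d))} {φ : ℝ → ℝ}

theorem hasDerivAt_measureReal_conv_gaussianMeasure (hs : MeasurableSet s) {r : ℝ} (hr : 0 < r) :
    HasDerivAt (fun u ↦ (μ ∗ gaussianMeasure d (u ^ 2)).real s)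
      (2 * r * ∫ p in {p : EuclideanSpace ℝ (Fin d) × EuclideanSpace ℝ (Fin d) | p.1 + p.2 ∈ s},
        gaussDy d (r ^ 2) p.2 ∂(μ.prod volume)) r := by
  have hchain := HasDerivAt.comp (h := fun u : ℝ ↦ u ^ 2) r
    (hasDerivAt_setIntegral_gaussD μ {p | p.1 + p.2 ∈ s} (pow_pos hr 2)) (hasDerivAt_pow 2 r)
  refine (hchain.congr_of_eventuallyEq ?_).congr_deriv (by simp [mul_comm])
  filter_upwards [eventually_gt_nhds hr] with u hu
  exact measureReal_conv_withDensity_ofReal μ volume (gaussD_nonneg (pow_pos hu 2))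
    measurable_gaussD hs

theorem abs_deriv_measureReal_conv_gaussianMeasure_le (hd : 0 < d) (hs : MeasurableSet s)
    {r : ℝ} (hr : 0 < r) :
    |deriv (fun u ↦ (μ ∗ gaussianMeasure d (u ^ 2)).real s) r| ≤
      2 / detailConst d * (detail d μ r / r) := by
  have hK := detailConst_pos hd
  rw [(hasDerivAt_measureReal_conv_gaussianMeasure hs hr).deriv, abs_mul,
    abs_of_pos (by positivity)]
  calc _ ≤ 2 * r * ∫ x, |∫ z, gaussDy d (r ^ 2) (x - z) ∂μ| := by
        gcongr
        exact abs_setIntegral_prod_add_mem_le (integrable_gaussDy (pow_pos hr 2)) hs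
    _ = 2 / detailConst d * (detail d μ r / r) := by
        rw [detail_eq]
        field_simp

theorem measureReal_conv_gaussianMeasure_le_add_integral (hd : 0 < d) (hs : MeasurableSet s)
    {a b : ℝ} (ha : 0 < a) (hab : a ≤ b)
    (hint : IntervalIntegrable (fun r ↦ φ r / r) volume a b)
    (hφ : ∀ r ∈ Ioo a b, detail d μ r ≤ φ r) :
    (μ ∗ gaussianMeasure d (a ^ 2)).real s ≤
      (μ ∗ gaussianMeasure d (b ^ 2)).real s + 2 / detailConst d * ∫ r in a..b, φ r / r := by
  have hK := detailConst_pos hd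
  have hderiv {r : ℝ} (hr : 0 < r) :
      HasDerivAt (fun u ↦ -(μ ∗ gaussianMeasure d (u ^ 2)).real s)
        (-deriv (fun u ↦ (μ ∗ gaussianMeasure d (u ^ 2)).real s) r) r :=
    (hasDerivAt_measureReal_conv_gaussianMeasure hs hr).differentiableAt.hasDerivAt.fun_neg
  have hincrement := intervalIntegral.sub_le_integral_of_hasDeriv_right_of_le hab
    (fun r hr ↦ (hderiv (ha.trans_le hr.1)).continuousAt.continuousWithinAt)
    (fun r hr ↦ (hderiv (ha.trans hr.1)).hasDerivWithinAt)
    (φ := fun r ↦ 2 / detailConst d * (φ r / r))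
    ((intervalIntegrable_iff_integrableOn_Icc_of_le hab).1 (hint.const_mul _))
    fun r hr ↦ by
      have hr₀ : 0 < r := ha.trans hr.1
      calc _ ≤ 2 / detailConst d * (detail d μ r / r) :=
            (neg_le_abs _).trans (abs_deriv_measureReal_conv_gaussianMeasure_le hd hs hr₀)
        _ ≤ 2 / detailConst d * (φ r / r) := by
            gcongr
            exact hφ r hr
  rw [intervalIntegral.integral_const_mul] at hincrement
  linarith

theorem measure_isOpen_le_conv_gaussianMeasure_add_integral (hd : 0 < d) (hs : IsOpen s) {b : ℝ}
    (hb : 0 < b) (hint : IntervalIntegrable (fun r ↦ φ r / r) volume 0 b)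
    (hφ : ∀ r ∈ Ioo 0 b, detail d μ r ≤ φ r) :
    μ s ≤ (μ ∗ gaussianMeasure d (b ^ 2)) s +
      ENNReal.ofReal (2 / detailConst d * ∫ r in 0..b, φ r / r) := by
  have hK := detailConst_pos hd
  have := isProbabilityMeasure_gaussianMeasure (d := d) one_pos
  have := isProbabilityMeasure_gaussianMeasure (d := d) (pow_pos hb 2)
  have hφ₀ : ∀ᵐ r ∂volume.restrict (Ioc 0 b), 0 ≤ φ r / r := by
    rw [← restrict_Ioo_eq_restrict_Ioc]
    filter_upwards [ae_restrict_mem measurableSet_Ioo] with r hr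
    exact div_nonneg ((detail_nonneg μ r).trans (hφ r hr)) hr.1.le
  have hle {t : ℝ} (ht : t ∈ Ioo 0 b) :
      (μ ∗ (gaussianMeasure d 1).map (t • ·)) s ≤ (μ ∗ gaussianMeasure d (b ^ 2)) s +
        ENNReal.ofReal (2 / detailConst d * ∫ r in 0..b, φ r / r) := by
    have := isProbabilityMeasure_gaussianMeasure (d := d) (pow_pos ht.1 2)
    rw [map_smul_gaussianMeasure ht.1 one_pos, mul_one, ← ofReal_measureReal,
      ← ofReal_measureReal]
    refine (ENNReal.ofReal_le_ofReal ?_).trans ENNReal.ofReal_add_le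
    refine (measureReal_conv_gaussianMeasure_le_add_integral hd hs.measurableSet ht.1 ht.2.le
      (hint.mono_set ?_) fun r hr ↦ hφ r ⟨ht.1.trans hr.1, hr.2⟩).trans ?_
    · rw [uIcc_of_le ht.2.le, uIcc_of_le hb.le]
      exact Icc_subset_Icc_left ht.1.le
    · gcongr
      exact intervalIntegral.integral_mono_interval ht.1.le ht.2.le le_rfl hφ₀ hint
  have hfreq : ∃ᶠ t in 𝓝 (0 : ℝ), (μ ∗ (gaussianMeasure d 1).map (t • ·)) s ≤
      (μ ∗ gaussianMeasure d (b ^ 2)) s +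
        ENNReal.ofReal (2 / detailConst d * ∫ r in 0..b, φ r / r) := by
    refine Frequently.filter_mono (Eventually.frequently ?_) (nhdsWithin_le_nhds (s := Ioi 0))
    filter_upwards [Ioo_mem_nhdsGT hb] with t ht using hle ht
  exact (measure_isOpen_le_liminf_conv_map_smul μ _ hs).trans (liminf_le_of_frequently_le' hfreq)

end DerivativeOfSmoothing

end GaussianSmoothing

section IntegrableAtFilter

variable {E : Type*} [NormedAddCommGroup E] {f : ℝ → E} {a : ℝ}

theorem eventually_intervalIntegrable_nhdsGT (hf : IntegrableAtFilter f (𝓝[>] a)) :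
    ∀ᶠ b in 𝓝[>] a, IntervalIntegrable f volume a b := by
  obtain ⟨s, hs, hfs⟩ := hf
  obtain ⟨c, hac, hcs⟩ := mem_nhdsGT_iff_exists_Ioo_subset.1 hs
  filter_upwards [Ioo_mem_nhdsGT hac] with b hb
  rw [intervalIntegrable_iff_integrableOn_Ioc_of_le hb.1.le]
  exact hfs.mono_set ((Ioc_subset_Ioo_right hb.2).trans hcs)

theorem tendsto_intervalIntegral_nhdsGT_zero [NormedSpace ℝ E]
    (hf : IntegrableAtFilter f (𝓝[>] a)) :
    Tendsto (fun b ↦ ∫ x in a..b, f x) (𝓝[>] a) (𝓝 0) := by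
  obtain ⟨c, hc, hac⟩ :=
    ((eventually_intervalIntegrable_nhdsGT hf).and self_mem_nhdsWithin).exists
  have hcont := intervalIntegral.continuousOn_primitive_interval
    ((intervalIntegrable_iff').1 hc) a left_mem_uIcc
  rw [uIcc_of_le (mem_Ioi.1 hac).le] at hcont
  simpa using hcont.tendsto.mono_left (nhdsWithin_le_of_mem (Icc_mem_nhdsGT hac))

end IntegrableAtFilter

theorem integrableAtFilter_log_inv_rpow_neg_div {β : ℝ} (hβ : 1 < β) :
    IntegrableAtFilter (fun r ↦ log r⁻¹ ^ (-β) / r) (𝓝[>] 0) := by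
  set g : ℝ → ℝ := fun r ↦ log r⁻¹ ^ (1 - β) / (β - 1)
  have hlog {r : ℝ} (hr : r ∈ Ioo 0 1) : 0 < log r⁻¹ := log_pos ((one_lt_inv₀ hr.1).2 hr.2)
  have hderiv {r : ℝ} (hr : r ∈ Ioo 0 1) : HasDerivAt g (log r⁻¹ ^ (-β) / r) r := by
    have hr₀ : r ≠ 0 := hr.1.ne'
    have hβ₁ : β - 1 ≠ 0 := (sub_pos.2 hβ).ne'
    refine ((((hasDerivAt_inv hr₀).log (inv_ne_zero hr₀)).rpow_const
      (.inl (hlog hr).ne')).div_const _).congr_deriv ?_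
    rw [show 1 - β - 1 = -β by ring]
    field_simp
    ring
  have hcont₀ : ContinuousWithinAt g (Ici 0) 0 := by
    have hg₀ : g 0 = 0 := by simp [g, zero_rpow (sub_neg.2 hβ).ne]
    have hlim : Tendsto (fun r ↦ log r⁻¹ ^ (-(β - 1))) (𝓝[>] 0) (𝓝 0) :=
      (tendsto_rpow_neg_atTop (sub_pos.2 hβ)).comp
        (tendsto_log_atTop.comp tendsto_inv_nhdsGT_zero)
    rw [← continuousWithinAt_Ioi_iff_Ici, ContinuousWithinAt, hg₀]
    simpa [g] using hlim.div_const (β - 1)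
  have hhalf : Ioc (0 : ℝ) 2⁻¹ ⊆ Ioo 0 1 := fun r hr ↦ ⟨hr.1, hr.2.trans_lt (by norm_num)⟩
  refine ⟨Ioc 0 2⁻¹, Ioc_mem_nhdsGT (by norm_num),
    intervalIntegral.integrableOn_deriv_of_nonneg (g := g) ?_
      (fun r hr ↦ hderiv (hhalf (Ioo_subset_Ioc_self hr))) fun r hr ↦ ?_⟩
  · intro r hr
    obtain rfl | hr₀ := hr.1.eq_or_lt
    · exact hcont₀.mono Icc_subset_Ici_self
    · exact (hderiv (hhalf ⟨hr₀, hr.2⟩)).continuousAt.continuousWithinAt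
  · have := hlog (hhalf (Ioo_subset_Ioc_self hr))
    exact div_nonneg (by positivity) hr.1.le

theorem statement4_general {d : ℕ} (μ : Measure (EuclideanSpace ℝ (Fin d))) [IsFiniteMeasure μ]
    {φ : ℝ → ℝ} (hφ : IntegrableAtFilter (fun r ↦ φ r / r) (𝓝[>] 0))
    (h : ∀ᶠ r in 𝓝[>] 0, detail d μ r ≤ φ r) : μ ≪ volume := by
  obtain rfl | hd := d.eq_zero_or_pos
  · exact absolutelyContinuous_of_discreteTopology μ volume
  refine absolutelyContinuous_of_forall_measure_isOpen_le fun ε hε ↦ ?_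
  have hsmall : ∀ᶠ b in 𝓝[>] 0,
      ENNReal.ofReal (2 / detailConst d * ∫ r in 0..b, φ r / r) < ε := by
    have := ENNReal.tendsto_ofReal
      ((tendsto_intervalIntegral_nhdsGT_zero hφ).const_mul (2 / detailConst d))
    rw [mul_zero, ENNReal.ofReal_zero] at this
    exact this.eventually_lt_const hε
  obtain ⟨c, hc, hφc⟩ := mem_nhdsGT_iff_exists_Ioo_subset.1 h
  obtain ⟨b, hbε, hint, hb⟩ := (hsmall.and ((eventually_intervalIntegrable_nhdsGT hφ).and
    (Ioo_mem_nhdsGT hc))).exists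
  have := isProbabilityMeasure_gaussianMeasure (d := d) (pow_pos hb.1 2)
  refine ⟨μ ∗ gaussianMeasure d (b ^ 2), inferInstance,
    Measure.conv_absolutelyContinuous (withDensity_absolutelyContinuous _ _), fun U hU ↦ ?_⟩
  refine (measure_isOpen_le_conv_gaussianMeasure_add_integral hd hU hb.1 hint
    fun r hr ↦ hφc ⟨hr.1, hr.2.trans hb.2⟩).trans ?_
  gcongr

theorem statement4 {d : ℕ} (μ : Measure (EuclideanSpace ℝ (Fin d)))
    [IsProbabilityMeasure μ] (β : ℝ) (hβ : 1 < β)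
    (h : ∃ r₀ > (0 : ℝ), ∀ r, 0 < r → r < r₀ → detail d μ r < Real.log r⁻¹ ^ (-β)) :
    μ ≪ volume := by
  obtain ⟨r₀, hr₀, h⟩ := h
  refine statement4_general μ (integrableAtFilter_log_inv_rpow_neg_div hβ) ?_
  filter_upwards [Ioo_mem_nhdsGT hr₀] with r hr using (h r hr.1 hr.2).le
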